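/- Let H ⊆ ℤ_M be a union of step classes containing 0, with standard complement H′, and let δ = 1/(M·φ(M)) where φ is Euler's totient function. If there exists a tiling A ⊕ B = ℤ_M with Div*(A) = H, then |A| = ω(H) = D^{δ+}(H) = D^+(H) = D^−(H) and |B| = ω(H′) = D^+(H′) = D^−(H′). -/

import Mathlib

/-!
For a nonempty set `C`, averaging the normalized autocorrelation of `C` over all dilates by units
gives a step function `avgCorr M C` with value `1` at `0`, total mass `|C|`, nonnegative Fourier
transform, and support exactly `Div*(C)`. It is therefore admissible for `D^+(K)` and `D^−(K)`
whenever `K` contains `Div*(C)`. On `Div*(C)` it is at least `1 / (|C| φ(M)) ≥ 1 / (M φ(M))`, so it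
is also admissible for `D^{δ+}(Div*(C))`.

In a tiling `A ⊕ B`, the Fourier transforms of the indicators of `A` and `B` have product zero at
each nonzero frequency. Their zero sets are invariant under units, by Galois conjugation of roots
of unity (`maskHat_unit_mul`), so the same holds for the transforms of `avgCorr M A` and
`avgCorr M B`. Parseval then shows that the product of these two functions has total mass `1`,
which is its value at `0`; hence `Div*(A) ∩ Div*(B) = {0}` (`IsTiling.divStar_inter`).

Finally, if `h` is admissible for `D^−(H)`, Parseval applied to `h` and `avgCorr M B` gives
`(∑ h) * |B| ≤ M = |A| * |B|` (`sum_mul_sum_le`). So `|A|` is both attained by `avgCorr M A` and an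
upper bound; cliques are covered because the averaged autocorrelation of a clique is admissible.
The same argument with the roles of `A` and `B` exchanged handles `H'`.
-/

open Finset

noncomputable def fhat (M : ℕ) [NeZero M] (f : ZMod M → ℝ) (ξ : ZMod M) : ℂ :=
  ∑ z : ZMod M, (f z : ℂ) *
    Complex.exp (-2 * Real.pi * Complex.I * ((z.val : ℂ) * (ξ.val : ℂ)) / (M : ℂ))

noncomputable def conv (M : ℕ) [NeZero M] (f g : ZMod M → ℝ) (x : ZMod M) : ℝ :=
  ∑ y : ZMod M, f y * g (x - y)

def IsStepFun (M : ℕ) [NeZero M] (f : ZMod M → ℝ) : Prop :=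
  ∀ z w : ZMod M, Nat.gcd z.val M = Nat.gcd w.val M → f z = f w

/-- `Φ_d | F` : the Fourier transform of `f` vanishes on the step class `R_{M/d}`. -/
def cycDvd (M : ℕ) [NeZero M] (f : ZMod M → ℝ) (d : ℕ) : Prop :=
  ∀ ξ : ZMod M, Nat.gcd ξ.val M = M / d → fhat M f ξ = 0

open scoped Classical in
noncomputable def SF (M : ℕ) [NeZero M] (f : ZMod M → ℝ) : Finset ℕ :=
  M.divisors.filter (fun s => IsPrimePow s ∧ cycDvd M f s)

noncomputable def satT1 (M : ℕ) [NeZero M] (f : ZMod M → ℝ) : Prop :=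
  ∑ z : ZMod M, f z = ∏ s ∈ SF M f, (s.minFac : ℝ)

def satT2 (M : ℕ) [NeZero M] (f : ZMod M → ℝ) : Prop :=
  ∀ S : Finset ℕ, S.Nonempty → S ⊆ SF M f →
    (∀ s ∈ S, ∀ t ∈ S, s ≠ t → s.minFac ≠ t.minFac) →
    cycDvd M f (∏ s ∈ S, s)

def IsTiling (M : ℕ) [NeZero M] (A B : Finset (ZMod M)) : Prop :=
  ∀ z : ZMod M, ∃! ab : ZMod M × ZMod M, ab.1 ∈ A ∧ ab.2 ∈ B ∧ ab.1 + ab.2 = z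

/-- `H` is a union of step classes. -/
def IsStepSet (M : ℕ) [NeZero M] (H : Set (ZMod M)) : Prop :=
  ∀ z w : ZMod M, Nat.gcd z.val M = Nat.gcd w.val M → (z ∈ H ↔ w ∈ H)

def divStar (M : ℕ) [NeZero M] (A : Finset (ZMod M)) : Set (ZMod M) :=
  {z | ∃ a ∈ A, ∃ a' ∈ A, Nat.gcd z.val M = Nat.gcd (a - a').val M}

noncomputable def cliqueNum (M : ℕ) [NeZero M] (H : Set (ZMod M)) : ℕ :=
  sSup {n | ∃ C : Finset (ZMod M), (∀ x ∈ C, ∀ y ∈ C, x - y ∈ H) ∧ C.card = n}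

noncomputable def Dplus (M : ℕ) [NeZero M] (H : Set (ZMod M)) : ℝ :=
  sSup {t : ℝ | ∃ h : ZMod M → ℝ, IsStepFun M h ∧ h 0 = 1 ∧
    (∀ ξ, (fhat M h ξ).im = 0 ∧ 0 ≤ (fhat M h ξ).re) ∧
    (∀ z ∈ H, 0 ≤ h z) ∧ (∀ z ∉ H, h z = 0) ∧ t = ∑ z : ZMod M, h z}

noncomputable def Dminus (M : ℕ) [NeZero M] (H : Set (ZMod M)) : ℝ :=
  sSup {t : ℝ | ∃ h : ZMod M → ℝ, IsStepFun M h ∧ h 0 = 1 ∧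
    (∀ ξ, (fhat M h ξ).im = 0 ∧ 0 ≤ (fhat M h ξ).re) ∧
    (∀ z ∉ H, h z ≤ 0) ∧ t = ∑ z : ZMod M, h z}

noncomputable def Ddelta (M : ℕ) [NeZero M] (δ : ℝ) (H : Set (ZMod M)) : ℝ :=
  sSup {t : ℝ | ∃ h : ZMod M → ℝ, IsStepFun M h ∧ h 0 = 1 ∧
    (∀ ξ, (fhat M h ξ).im = 0 ∧ 0 ≤ (fhat M h ξ).re) ∧
    (∀ z ∈ H, δ ≤ h z) ∧ (∀ z ∉ H, h z = 0) ∧ t = ∑ z : ZMod M, h z}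

open scoped Classical in
noncomputable def SH (M : ℕ) [NeZero M] (H : Set (ZMod M)) : Finset ℕ :=
  M.divisors.filter (fun s => IsPrimePow s ∧ ∀ ξ : ZMod M, Nat.gcd ξ.val M = M / s → ξ ∈ H)

noncomputable def kH (M : ℕ) [NeZero M] (H : Set (ZMod M)) : ℕ :=
  ∏ s ∈ SH M H, s.minFac

def cubVertex (M : ℕ) [NeZero M] {K : ℕ} (p : Fin K → ℕ) (c : ZMod M)
    (ρ : Fin K → ℕ) (S : Finset (Fin K)) : ZMod M :=
  c + ∑ i ∈ S, ((ρ i * (M / p i) : ℕ) : ZMod M)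

noncomputable def cubEval (M : ℕ) [NeZero M] {K : ℕ} (p : Fin K → ℕ) (c : ZMod M)
    (ρ : Fin K → ℕ) (f : ZMod M → ℝ) : ℝ :=
  ∑ S : Finset (Fin K), (-1 : ℝ) ^ S.card * f (cubVertex M p c ρ S)

noncomputable def hAfun (M : ℕ) [NeZero M] (A : Finset (ZMod M)) (z : ZMod M) : ℝ :=
  (1 / ((A.card : ℝ) * (Nat.totient M : ℝ))) *
    ∑ r ∈ Finset.univ.filter (fun r : ZMod M => Nat.gcd r.val M = 1),
      conv M (fun x => if x ∈ A.image (fun a => r * a) then (1 : ℝ) else 0)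
             (fun x => if x ∈ A.image (fun a => -(r * a)) then (1 : ℝ) else 0) z

noncomputable def fN (M : ℕ) [NeZero M] (f : ZMod M → ℝ) (N : ℕ) (z : ZMod N) : ℝ :=
  ∑ y ∈ Finset.univ.filter (fun y : ZMod M => ((y.val : ℕ) : ZMod N) = z), f y

/-- The discrete Fourier transform of the indicator function of `C`. -/
noncomputable def maskHat (M : ℕ) [NeZero M] (C : Finset (ZMod M)) (ξ : ZMod M) : ℂ :=
  ∑ c ∈ C, ZMod.stdAddChar (-(c * ξ))

/-- The normalized autocorrelation of `C`, averaged over all dilates `u • C` by units `u` of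
`ZMod M`: its value at `z` is proportional to the number of triples `(u, c, c')` with
`u * (c - c') = z`, and it is `1` at the origin. -/
noncomputable def avgCorr (M : ℕ) [NeZero M] (C : Finset (ZMod M)) (z : ZMod M) : ℝ :=
  (1 / ((C.card : ℝ) * (Nat.totient M : ℝ))) *
    ∑ u : (ZMod M)ˣ, ∑ c ∈ C, ∑ c' ∈ C, if (u : ZMod M) * (c - c') = z then (1 : ℝ) else 0

section
variable {M : ℕ} [NeZero M]

/-! ### The Fourier transform -/

lemma fhat_eq (f : ZMod M → ℝ) (ξ : ZMod M) :
    fhat M f ξ = ∑ z : ZMod M, (f z : ℂ) * ZMod.stdAddChar (-(z * ξ)) := by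
  unfold fhat
  refine Finset.sum_congr rfl fun z _ => ?_
  have h := ZMod.stdAddChar_coe (N := M) (-((z.val : ℤ) * (ξ.val : ℤ)))
  push_cast at h
  rw [ZMod.natCast_zmod_val, ZMod.natCast_zmod_val] at h
  rw [h]
  congr 2
  ring

lemma fhat_zero (f : ZMod M → ℝ) : fhat M f 0 = ((∑ z, f z : ℝ) : ℂ) := by
  simp [fhat_eq]

/-! ### Step classes as orbits of the unit group -/

lemma gcd_unit_mul (u : (ZMod M)ˣ) (z : ZMod M) :
    Nat.gcd ((u : ZMod M) * z).val M = Nat.gcd z.val M := by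
  rw [ZMod.val_mul, (Nat.mod_modEq _ _).gcd_eq]
  exact (ZMod.val_coe_unit_coprime u).gcd_mul_left_cancel _

lemma exists_unit_of_gcd_eq {z w : ZMod M} (h : Nat.gcd z.val M = Nat.gcd w.val M) :
    ∃ u : (ZMod M)ˣ, w = u * z := by
  have key : ∀ z : ZMod M, ∃ u : (ZMod M)ˣ, z = u * (Nat.gcd z.val M : ℕ) := by
    intro z
    obtain ⟨d, hd, u, hu, rfl⟩ := z.eq_unit_mul_divisor
    obtain ⟨u, rfl⟩ := hu
    refine ⟨u, ?_⟩
    rw [gcd_unit_mul, ZMod.val_natCast, (Nat.mod_modEq _ _).gcd_eq, Nat.gcd_eq_left hd]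
  obtain ⟨u, hu⟩ := key z
  obtain ⟨v, hv⟩ := key w
  refine ⟨v * u⁻¹, ?_⟩
  rw [hv, ← h]
  conv_rhs => rw [hu]
  rw [← mul_assoc, ← Units.val_mul, inv_mul_cancel_right]

/-! ### Parseval and linear-programming duality -/

/-- Polarized Parseval identity. -/
lemma parseval (h g : ZMod M → ℝ) :
    ∑ ξ : ZMod M, fhat M h ξ * (starRingEnd ℂ) (fhat M g ξ) = ((M * ∑ z, h z * g z : ℝ) : ℂ) := by
  classical
  have e : ∀ ξ : ZMod M, fhat M h ξ * (starRingEnd ℂ) (fhat M g ξ) =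
      ∑ z : ZMod M, ∑ w : ZMod M, (h z : ℂ) * (g w : ℂ) * ZMod.stdAddChar (ξ * (w - z)) := by
    intro ξ
    rw [fhat_eq, fhat_eq, map_sum, Finset.sum_mul_sum]
    refine Finset.sum_congr rfl fun z _ => Finset.sum_congr rfl fun w _ => ?_
    rw [map_mul, Complex.conj_ofReal, ← AddChar.map_neg_eq_conj, neg_neg,
      show ξ * (w - z) = -(z * ξ) + w * ξ by ring, AddChar.map_add_eq_mul]
    ring
  simp_rw [e]
  rw [Finset.sum_comm]
  push_cast
  rw [Finset.mul_sum]
  refine Finset.sum_congr rfl fun z _ => ?_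
  rw [Finset.sum_comm]
  simp_rw [← Finset.mul_sum, AddChar.sum_mulShift _ (ZMod.isPrimitive_stdAddChar M), sub_eq_zero]
  simp
  ring

/-- Weak duality for the Delsarte bound: in Parseval's identity for `h` and `g`, keep only the
frequency `0` on one side and only the point `0` on the other. -/
lemma sum_mul_sum_le {h g : ZMod M → ℝ} (h0 : h 0 = 1) (g0 : g 0 = 1)
    (hh : ∀ ξ, (fhat M h ξ).im = 0 ∧ 0 ≤ (fhat M h ξ).re)
    (hg : ∀ ξ, (fhat M g ξ).im = 0 ∧ 0 ≤ (fhat M g ξ).re)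
    (hn : ∀ z, z ≠ 0 → h z * g z ≤ 0) : (∑ z, h z) * (∑ z, g z) ≤ M := by
  have hp := congrArg Complex.re (parseval h g)
  rw [Complex.ofReal_re, Complex.re_sum] at hp
  have h1 : ∑ z, h z * g z ≤ 1 := by
    rw [← Finset.add_sum_erase _ _ (Finset.mem_univ (0 : ZMod M)), h0, g0]
    have := Finset.sum_nonpos (s := Finset.univ.erase (0 : ZMod M)) (f := fun z => h z * g z)
      (fun z hz => hn z (Finset.ne_of_mem_erase hz))
    linarith
  have h2 := Finset.single_le_sum (f := fun ξ => (fhat M h ξ * (starRingEnd ℂ) (fhat M g ξ)).re)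
    (s := Finset.univ) (fun ξ _ => by
      simp only [Complex.mul_re, Complex.conj_re, (hh ξ).1]
      have := mul_nonneg (hh ξ).2 (hg ξ).2
      simpa using this) (Finset.mem_univ (0 : ZMod M))
  simp only [fhat_zero, Complex.conj_ofReal, ← Complex.ofReal_mul, Complex.ofReal_re] at h2
  have : (0 : ℝ) ≤ M := Nat.cast_nonneg M
  nlinarith

/-! ### Galois invariance of the zero set -/

/-- Zeros of the mask Fourier transform are stable under dilation by units: `maskHat C ξ` is an
integer polynomial evaluated at a root of unity, and dilation replaces this root by a
Galois conjugate. -/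
lemma maskHat_unit_mul {C : Finset (ZMod M)} {ξ : ZMod M} (h : maskHat M C ξ = 0)
    (u : (ZMod M)ˣ) : maskHat M C (u * ξ) = 0 := by
  set ζ : ℂ := ZMod.stdAddChar (-ξ) with hζ
  have hpow : ∀ n : ℕ, ζ ^ n = ZMod.stdAddChar (-((n : ZMod M) * ξ)) := by
    intro n
    rw [hζ, ← AddChar.map_nsmul_eq_pow]
    simp
  have hM : ζ ^ M = 1 := by simp [hpow]
  have hprim := IsPrimitiveRoot.orderOf ζ
  have hpos : 0 < orderOf ζ := orderOf_pos_iff.2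
    (isOfFinOrder_iff_pow_eq_one.2 ⟨M, NeZero.pos M, hM⟩)
  have hcop : (u : ZMod M).val.Coprime (orderOf ζ) :=
    (ZMod.val_coe_unit_coprime u).coprime_dvd_right (orderOf_dvd_of_pow_eq_one hM)
  let P : Polynomial ℤ := ∑ c ∈ C, Polynomial.X ^ c.val
  have hP : Polynomial.aeval ζ P = 0 := by
    rw [← h]
    simp [P, hpow, maskHat]
  have hdvd : minpoly ℤ ζ ∣ P := minpoly.isIntegrallyClosed_dvd (hprim.isIntegral hpos) hP
  rw [hprim.minpoly_eq_pow_coprime hcop] at hdvd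
  have := Polynomial.aeval_eq_zero_of_dvd_aeval_eq_zero hdvd (minpoly.aeval ℤ _)
  rw [← this]
  simp only [P, maskHat, map_sum, map_pow, Polynomial.aeval_X]
  refine Finset.sum_congr rfl fun c _ => ?_
  rw [← pow_mul, hpow]
  congr 2
  push_cast
  rw [ZMod.natCast_zmod_val, ZMod.natCast_zmod_val]
  ring

/-! ### Averaged autocorrelations -/

lemma avgCorr_unit_mul (C : Finset (ZMod M)) (v : (ZMod M)ˣ) (z : ZMod M) :
    avgCorr M C (v * z) = avgCorr M C z := by
  unfold avgCorr
  congr 1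
  rw [← Equiv.sum_comp (Equiv.mulLeft v)]
  refine Finset.sum_congr rfl fun u _ => Finset.sum_congr rfl fun c _ =>
    Finset.sum_congr rfl fun c' _ => ?_
  simp [mul_assoc]

lemma avgCorr_isStepFun (C : Finset (ZMod M)) : IsStepFun M (avgCorr M C) := by
  intro z w h
  obtain ⟨u, rfl⟩ := exists_unit_of_gcd_eq h
  rw [avgCorr_unit_mul]

lemma card_mul_totient_pos {C : Finset (ZMod M)} (hC : C.Nonempty) :
    (0 : ℝ) < C.card * Nat.totient M :=
  mul_pos (by exact_mod_cast hC.card_pos)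
    (by exact_mod_cast Nat.totient_pos.2 (NeZero.pos M))

lemma avgCorr_zero {C : Finset (ZMod M)} (hC : C.Nonempty) : avgCorr M C 0 = 1 := by
  have := card_mul_totient_pos hC
  unfold avgCorr
  have e : ∑ u : (ZMod M)ˣ, ∑ c ∈ C, ∑ c' ∈ C,
      (if (u : ZMod M) * (c - c') = 0 then (1 : ℝ) else 0) = C.card * Nat.totient M := by
    simp [sub_eq_zero, ZMod.card_units_eq_totient, mul_comm]
  rw [e, one_div, inv_mul_cancel₀ this.ne']

lemma avgCorr_nonneg (C : Finset (ZMod M)) (z : ZMod M) : 0 ≤ avgCorr M C z := by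
  unfold avgCorr
  positivity

/-- On the step class of a difference of `C` at least one triple is counted. -/
lemma le_avgCorr {C : Finset (ZMod M)} {z : ZMod M} (hz : z ∈ divStar M C) :
    1 / ((C.card : ℝ) * (Nat.totient M : ℝ)) ≤ avgCorr M C z := by
  obtain ⟨a, ha, a', ha', h⟩ := hz
  obtain ⟨u, rfl⟩ := exists_unit_of_gcd_eq h.symm
  rw [avgCorr_unit_mul]
  unfold avgCorr
  refine le_mul_of_one_le_right (by positivity) ?_
  have key : ∀ {ι : Type} (s : Finset ι) (f : ι → ℝ) (i : ι), i ∈ s → (∀ j, 0 ≤ f j) →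
      1 ≤ f i → 1 ≤ ∑ j ∈ s, f j := fun s f i hi hf h1 =>
    h1.trans (Finset.single_le_sum (fun j _ => hf j) hi)
  refine key _ _ 1 (Finset.mem_univ _) (fun _ => by positivity) ?_
  refine key _ _ a ha (fun _ => by positivity) ?_
  refine key _ _ a' ha' (fun _ => by positivity) ?_
  simp

lemma avgCorr_eq_zero {C : Finset (ZMod M)} {z : ZMod M} (hz : z ∉ divStar M C) :
    avgCorr M C z = 0 := by
  unfold avgCorr
  rw [mul_eq_zero]
  right
  refine Finset.sum_eq_zero fun u _ => Finset.sum_eq_zero fun c hc =>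
    Finset.sum_eq_zero fun c' hc' => if_neg ?_
  rintro rfl
  exact hz ⟨c, hc, c', hc', gcd_unit_mul _ _⟩

lemma sum_avgCorr {C : Finset (ZMod M)} (hC : C.Nonempty) :
    ∑ z, avgCorr M C z = C.card := by
  have := card_mul_totient_pos hC
  unfold avgCorr
  rw [← Finset.mul_sum, Finset.sum_comm]
  have e : ∀ u : (ZMod M)ˣ, ∑ z : ZMod M, ∑ c ∈ C, ∑ c' ∈ C,
      (if (u : ZMod M) * (c - c') = z then (1 : ℝ) else 0) = C.card * C.card := by
    intro u
    rw [Finset.sum_comm]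
    simp_rw [Finset.sum_comm (s := Finset.univ) (t := C)]
    simp
  simp_rw [e]
  rw [Finset.sum_const, Finset.card_univ, ZMod.card_units_eq_totient, nsmul_eq_mul]
  rw [one_div, inv_mul_eq_div, div_eq_iff this.ne']
  ring

lemma fhat_avgCorr (C : Finset (ZMod M)) (ξ : ZMod M) :
    fhat M (avgCorr M C) ξ =
      ((1 / ((C.card : ℝ) * (Nat.totient M : ℝ)) *
        ∑ u : (ZMod M)ˣ, Complex.normSq (maskHat M C (u * ξ)) : ℝ) : ℂ) := by
  rw [fhat_eq]
  unfold avgCorr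
  push_cast
  simp_rw [mul_assoc]
  rw [← Finset.mul_sum]
  congr 1
  simp_rw [Finset.sum_mul]
  rw [Finset.sum_comm]
  refine Finset.sum_congr rfl fun u _ => ?_
  rw [← Complex.mul_conj, maskHat, map_sum, Finset.sum_mul_sum, Finset.sum_comm]
  refine Finset.sum_congr rfl fun c _ => ?_
  rw [Finset.sum_comm]
  refine Finset.sum_congr rfl fun c' _ => ?_
  rw [Finset.sum_eq_single ((u : ZMod M) * (c - c')) (fun z _ hz => by simp [hz.symm])
    (fun h => absurd (Finset.mem_univ _) h), if_pos rfl, Complex.ofReal_one, one_mul,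
    ← AddChar.map_neg_eq_conj, ← AddChar.map_add_eq_mul]
  congr 1
  ring

lemma fhat_avgCorr_nonneg (C : Finset (ZMod M)) (ξ : ZMod M) :
    (fhat M (avgCorr M C) ξ).im = 0 ∧ 0 ≤ (fhat M (avgCorr M C) ξ).re := by
  rw [fhat_avgCorr]
  refine ⟨Complex.ofReal_im _, ?_⟩
  rw [Complex.ofReal_re]
  exact mul_nonneg (by positivity) (Finset.sum_nonneg fun _ _ => Complex.normSq_nonneg _)

lemma fhat_avgCorr_eq_zero {C : Finset (ZMod M)} {ξ : ZMod M} (h : maskHat M C ξ = 0) :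
    fhat M (avgCorr M C) ξ = 0 := by
  rw [fhat_avgCorr]
  simp [maskHat_unit_mul h]

/-! ### Tilings -/

lemma IsTiling.sum_eq {A B : Finset (ZMod M)} (h : IsTiling M A B) (f : ZMod M → ℂ) :
    ∑ a ∈ A, ∑ b ∈ B, f (a + b) = ∑ z, f z := by
  rw [← Finset.sum_product']
  refine Finset.sum_bij (fun p _ => p.1 + p.2) (fun _ _ => Finset.mem_univ _) ?_ ?_ (fun _ _ => rfl)
  · intro p hp q hq hpq
    rw [Finset.mem_product] at hp hq
    exact (h (q.1 + q.2)).unique ⟨hp.1, hp.2, hpq⟩ ⟨hq.1, hq.2, rfl⟩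
  · intro z _
    obtain ⟨p, ⟨h1, h2, h3⟩, -⟩ := h z
    exact ⟨p, Finset.mem_product.2 ⟨h1, h2⟩, h3⟩

lemma IsTiling.card_mul {A B : Finset (ZMod M)} (h : IsTiling M A B) :
    (A.card : ℝ) * B.card = M := by
  have := h.sum_eq fun _ => 1
  simp at this
  exact_mod_cast this

lemma IsTiling.maskHat_mul {A B : Finset (ZMod M)} (h : IsTiling M A B) {ξ : ZMod M}
    (hξ : ξ ≠ 0) : maskHat M A ξ * maskHat M B ξ = 0 := by
  classical
  have e := h.sum_eq fun z => ZMod.stdAddChar (-(z * ξ))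
  simp_rw [← mul_neg] at e
  rw [AddChar.sum_mulShift _ (ZMod.isPrimitive_stdAddChar M), if_neg (neg_ne_zero.2 hξ)] at e
  unfold maskHat
  rw [Finset.sum_mul_sum]
  simpa [add_mul, AddChar.map_add_eq_mul, ← mul_neg] using e

/-- Sands' theorem: the difference sets of the two factors of a tiling share no step class
except `{0}`. -/
lemma IsTiling.divStar_inter {A B : Finset (ZMod M)} (h : IsTiling M A B)
    (hA : A.Nonempty) (hB : B.Nonempty) {z : ZMod M}
    (hzA : z ∈ divStar M A) (hzB : z ∈ divStar M B) : z = 0 := by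
  by_contra hz
  have hMpos : (0 : ℝ) < M := by exact_mod_cast NeZero.pos M
  have hp := parseval (avgCorr M A) (avgCorr M B)
  -- By the tiling condition only the frequency `0` contributes to Parseval's sum.
  rw [Finset.sum_eq_single 0 (fun ξ _ hξ => by
    rcases mul_eq_zero.1 (h.maskHat_mul hξ) with h' | h' <;> simp [fhat_avgCorr_eq_zero h'])
    (fun h' => absurd (Finset.mem_univ _) h')] at hp
  rw [fhat_zero, fhat_zero, Complex.conj_ofReal, sum_avgCorr hA, sum_avgCorr hB,
    ← Complex.ofReal_mul, Complex.ofReal_inj, h.card_mul] at hp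
  have hs : ∑ z, avgCorr M A z * avgCorr M B z = 1 :=
    mul_left_cancel₀ hMpos.ne' (by rw [← hp, mul_one])
  rw [← Finset.add_sum_erase _ _ (Finset.mem_univ (0 : ZMod M)), avgCorr_zero hA,
    avgCorr_zero hB, mul_one, add_eq_left] at hs
  have hpos : 0 < avgCorr M A z * avgCorr M B z :=
    mul_pos ((one_div_pos.2 (card_mul_totient_pos hA)).trans_le (le_avgCorr hzA))
      ((one_div_pos.2 (card_mul_totient_pos hB)).trans_le (le_avgCorr hzB))
  exact hpos.ne' ((Finset.sum_eq_zero_iff_of_nonneg fun w _ =>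
    mul_nonneg (avgCorr_nonneg A w) (avgCorr_nonneg B w)).1 hs z
      (Finset.mem_erase.2 ⟨hz, Finset.mem_univ _⟩))

/-! ### Optimality in the Delsarte problems -/

/-- If `|C| * |D| = M` and `K` contains all differences of `C` and no nonzero difference of `D`,
then `avgCorr M C` is optimal in each Delsarte problem for `K`: `avgCorr M D` is a dual certificate
of the upper bound `M / |D| = |C|`. -/
lemma delsarte_of_dual {K : Set (ZMod M)} (hK : IsStepSet M K) {C D : Finset (ZMod M)}
    (hC : C.Nonempty) (hD : D.Nonempty) (hCD : (C.card : ℝ) * D.card = M)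
    (hCK : ∀ z ∈ divStar M C, z ∈ K) (hDK : ∀ z ∈ divStar M D, z ≠ 0 → z ∉ K) :
    C.card = cliqueNum M K ∧ (C.card : ℝ) = Dplus M K ∧ (C.card : ℝ) = Dminus M K ∧
      ∀ δ : ℝ, (∀ z ∈ K, δ ≤ avgCorr M C z) → (C.card : ℝ) = Ddelta M δ K := by
  have hDpos : (0 : ℝ) < D.card := by exact_mod_cast hD.card_pos
  have bound : ∀ h : ZMod M → ℝ, h 0 = 1 →
      (∀ ξ, (fhat M h ξ).im = 0 ∧ 0 ≤ (fhat M h ξ).re) → (∀ z ∉ K, h z ≤ 0) →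
      ∑ z, h z ≤ C.card := by
    intro h h0 hh hn
    have := sum_mul_sum_le h0 (avgCorr_zero hD) hh (fhat_avgCorr_nonneg D) fun z hz => by
      by_cases hzD : z ∈ divStar M D
      · exact mul_nonpos_of_nonpos_of_nonneg (hn z (hDK z hzD hz)) (avgCorr_nonneg D z)
      · rw [avgCorr_eq_zero hzD, mul_zero]
    rw [sum_avgCorr hD, ← hCD] at this
    exact le_of_mul_le_mul_right this hDpos
  have vanish : ∀ E : Finset (ZMod M), (∀ z ∈ divStar M E, z ∈ K) →
      ∀ z ∉ K, avgCorr M E z = 0 := fun E hE z hz => avgCorr_eq_zero fun h => hz (hE z h)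
  have hself := vanish C hCK
  refine ⟨?_, ?_, ?_, ?_⟩
  · refine Eq.symm (IsGreatest.csSup_eq ?_)
    refine ⟨⟨C, fun x hx y hy => hCK _ ⟨x, hx, y, hy, rfl⟩, rfl⟩, ?_⟩
    rintro n ⟨E, hE, rfl⟩
    rcases E.eq_empty_or_nonempty with rfl | hne
    · simp
    have hEK : ∀ z ∈ divStar M E, z ∈ K := by
      rintro z ⟨a, ha, a', ha', hz⟩
      exact (hK _ _ hz).2 (hE a ha a' ha')
    have := bound _ (avgCorr_zero hne) (fhat_avgCorr_nonneg E) fun z hz => (vanish E hEK z hz).le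
    rw [sum_avgCorr hne] at this
    exact_mod_cast this
  · refine Eq.symm (IsGreatest.csSup_eq ?_)
    refine ⟨⟨avgCorr M C, avgCorr_isStepFun C, avgCorr_zero hC,
      fhat_avgCorr_nonneg C, fun z _ => avgCorr_nonneg C z, hself, (sum_avgCorr hC).symm⟩, ?_⟩
    rintro t ⟨h, -, h0, hh, -, hn, rfl⟩
    exact bound h h0 hh fun z hz => (hn z hz).le
  · refine Eq.symm (IsGreatest.csSup_eq ?_)
    refine ⟨⟨avgCorr M C, avgCorr_isStepFun C, avgCorr_zero hC,
      fhat_avgCorr_nonneg C, fun z hz => (hself z hz).le, (sum_avgCorr hC).symm⟩, ?_⟩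
    rintro t ⟨h, -, h0, hh, hn, rfl⟩
    exact bound h h0 hh hn
  · intro δ hδ
    refine Eq.symm (IsGreatest.csSup_eq ?_)
    refine ⟨⟨avgCorr M C, avgCorr_isStepFun C, avgCorr_zero hC,
      fhat_avgCorr_nonneg C, hδ, hself, (sum_avgCorr hC).symm⟩, ?_⟩
    rintro t ⟨h, -, h0, hh, -, hn, rfl⟩
    exact bound h h0 hh fun z hz => (hn z hz).le
end

/-- Let `δ = 1/(M·φ(M))`. If `A ⊕ B = ℤ_M` is a tiling with
`Div*(A) = H` (`H` a union of step classes containing `0`, with standard complement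
`H' = Hᶜ ∪ {0}`), then `|A| = ω(H) = D^{δ+}(H) = D^+(H) = D^−(H)` and
`|B| = ω(H') = D^+(H') = D^−(H')`. -/
theorem statement6 (M : ℕ) [NeZero M] (H : Set (ZMod M))
    (hstep : IsStepSet M H) (h0 : (0 : ZMod M) ∈ H)
    (H' : Set (ZMod M)) (hH' : H' = Hᶜ ∪ {0})
    (δ : ℝ) (hδ : δ = 1 / ((M : ℝ) * (Nat.totient M : ℝ)))
    (A B : Finset (ZMod M)) (htile : IsTiling M A B)
    (hA : divStar M A = H) :
    A.card = cliqueNum M H ∧ (cliqueNum M H : ℝ) = Ddelta M δ H ∧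
      Ddelta M δ H = Dplus M H ∧ Dplus M H = Dminus M H ∧
    B.card = cliqueNum M H' ∧ (cliqueNum M H' : ℝ) = Dplus M H' ∧
      Dplus M H' = Dminus M H' := by
  obtain ⟨p, ⟨hpA, hpB, -⟩, -⟩ := htile 0
  have hAne : A.Nonempty := ⟨_, hpA⟩
  have hBne : B.Nonempty := ⟨_, hpB⟩
  have hinter : ∀ z ∈ divStar M B, z ≠ 0 → z ∉ H := fun z hzB hz hzH =>
    hz (htile.divStar_inter hAne hBne (hA ▸ hzH) hzB)
  have hstep' : IsStepSet M H' := by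
    have hzero : ∀ z w : ZMod M, Nat.gcd z.val M = Nat.gcd w.val M → z = 0 → w = 0 := by
      rintro z w h rfl
      obtain ⟨u, rfl⟩ := exists_unit_of_gcd_eq h
      exact mul_zero _
    intro z w h
    rw [hH']
    exact or_congr (not_congr (hstep z w h)) ⟨hzero z w h, hzero w z h.symm⟩
  obtain ⟨a1, a2, a3, a4⟩ := delsarte_of_dual hstep hAne hBne htile.card_mul
    (fun z hz => hA ▸ hz) hinter
  obtain ⟨b1, b2, b3, -⟩ := delsarte_of_dual hstep' hBne hAne
    ((mul_comm _ _).trans htile.card_mul)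
    (fun z hz => by
      rw [hH']
      by_cases h : z = 0
      · exact Or.inr h
      · exact Or.inl (hinter z hz h))
    (fun z hz hne hz' => by
      rw [hH'] at hz'
      exact hz'.elim (fun h => h (hA ▸ hz)) hne)
  have hd := a4 δ fun z hz => by
    refine le_trans ?_ (le_avgCorr (C := A) (hA.symm ▸ hz))
    rw [hδ]
    refine one_div_le_one_div_of_le (card_mul_totient_pos hAne) ?_
    have : A.card ≤ M := by simpa using Finset.card_le_univ A
    gcongr
  rw [← a1, ← b1]
  exact ⟨rfl, hd, hd.symm.trans a2, a2.symm.trans a3, rfl, b2, b2.symm.trans b3⟩
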